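/- Let φ : ℝ → ℝ be smooth with φ ≡ 1 on [−1,1] and φ ≡ 0 outside [−2,2]. For γ ∈ [0,1], n ∈ ℤ², and λ, μ ∈ ℝ with μ ≠ 0, define K_γ(n,λ,μ) := ∫_ℝ φ(t) e^{−itλ} · (e^{γ(t−|t|)⟨n⟩² + itμ} − e^{−γ|t|⟨n⟩²}) / (γ⟨n⟩² + iμ) dt. Then there exists a constant C > 0, depending only on φ, such that for all γ₁, γ₂ ∈ [0,1], all n ∈ ℤ², and all λ ∈ ℝ, μ ∈ ℝ∖{0}: |K_{γ₂}(n,λ,μ) − K_{γ₁}(n,λ,μ)| ≤ C · |γ₂ − γ₁| · ⟨n⟩². -/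

import Mathlib

/-!
Write `a = γ ⟨n⟩² ≥ 0` and `z = a + iμ ≠ 0`. The fraction in the kernel is a mean over `s ∈ [0,1]`:
`(e^{a(t-|t|)+iμt} - e^{-a|t|}) / z = t ∫₀¹ e^{-a(|t|-st)} e^{isμt} ds`.
Since `0 ≤ |t| - st ≤ 2|t|`, the integrand on the right is Lipschitz in `a ≥ 0` with constant `2|t|`,
uniformly in `μ`, so the small denominator `z` is harmless and the fraction is Lipschitz in `a` with
constant `2t²` (`norm_duhFrac_sub_le`). Integrating against the compactly supported `φ` gives the
estimate with `C = 1 + ∫ |φ(t)| 2t² dt`.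
-/


noncomputable section

open MeasureTheory
open scoped ENNReal

/-- Japanese bracket of a real number: `⟨x⟩ = (1 + x²)^{1/2}`. -/
def jb (x : ℝ) : ℝ := Real.sqrt (1 + x ^ 2)

/-- `⟨n⟩² = 1 + |n|²` for `n ∈ ℤ²`. -/
def jbSq (n : ℤ × ℤ) : ℝ := 1 + (n.1 : ℝ) ^ 2 + (n.2 : ℝ) ^ 2

/-- The time-frequency kernel `K_γ(n,λ,μ)` of the time-truncated Duhamel operator of
`∂_t - (γ+i)(Δ-1)` on `𝕋²`, tested against the input mode `e^{itμ} e^{in·x}`. -/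
def duhKernel (φ : ℝ → ℝ) (γ : ℝ) (n : ℤ × ℤ) (l μ : ℝ) : ℂ :=
  ∫ t : ℝ, (φ t : ℂ) * Complex.exp (-(Complex.I * (l : ℂ) * (t : ℂ))) *
    ((Complex.exp (((γ * (t - |t|) * jbSq n : ℝ) : ℂ) + Complex.I * (μ : ℂ) * (t : ℂ)) -
        Complex.exp (-((γ * |t| * jbSq n : ℝ) : ℂ))) /
      (((γ * jbSq n : ℝ) : ℂ) + Complex.I * (μ : ℂ)))

lemma abs_exp_neg_sub_le {x y : ℝ} (hx : 0 ≤ x) (hy : 0 ≤ y) :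
    |Real.exp (-x) - Real.exp (-y)| ≤ |x - y| := by
  wlog h : x ≤ y generalizing x y
  · rw [abs_sub_comm, abs_sub_comm x y]
    exact this hy hx (le_of_not_ge h)
  have h1 : Real.exp (-y) ≤ Real.exp (-x) := Real.exp_le_exp.2 (by linarith)
  have h2 : Real.exp (-y) = Real.exp (-x) * Real.exp (x - y) := by
    rw [← Real.exp_add]; congr 1; ring
  have h3 := Real.add_one_le_exp (x - y)
  have h4 : Real.exp (-x) ≤ 1 := Real.exp_le_one_iff.2 (by linarith)
  rw [abs_of_nonneg (by linarith), abs_of_nonpos (by linarith), h2]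
  nlinarith [Real.exp_pos (-x)]

/-- The multiplier `(e^{a(t-|t|)+iμt} - e^{-a|t|}) / (a + iμ)` inside the kernel, with `a = γ ⟨n⟩²`. -/
def duhFrac (a μ t : ℝ) : ℂ :=
  (Complex.exp (((a * (t - |t|) : ℝ) : ℂ) + Complex.I * (μ : ℂ) * (t : ℂ)) -
      Complex.exp (-((a * |t| : ℝ) : ℂ))) / ((a : ℂ) + Complex.I * (μ : ℂ))

/-- The path `s ↦ e^{-a|t| + szt} / z`, `z = a + iμ`. Its increment over `[0,1]` is `duhFrac`. -/
def duhPath (a μ t s : ℝ) : ℂ :=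
  Complex.exp (-((a * |t| : ℝ) : ℂ) + (s : ℂ) * (((a : ℂ) + Complex.I * (μ : ℂ)) * (t : ℂ))) /
    ((a : ℂ) + Complex.I * (μ : ℂ))

lemma symbol_ne_zero {a μ : ℝ} (hμ : μ ≠ 0) : (a : ℂ) + Complex.I * (μ : ℂ) ≠ 0 := by
  intro h
  have := congrArg Complex.im h
  simp at this
  exact hμ this

lemma duhPath_one_sub_zero (a μ t : ℝ) :
    duhPath a μ t 1 - duhPath a μ t 0 = duhFrac a μ t := by
  unfold duhPath duhFrac
  rw [← sub_div]
  congr 3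
  · push_cast; ring
  · push_cast; ring

lemma hasDerivAt_duhPath {a μ : ℝ} (hμ : μ ≠ 0) (t s : ℝ) :
    HasDerivAt (duhPath a μ t)
      ((t : ℂ) * (((Real.exp (-(a * (|t| - s * t))) : ℝ) : ℂ) *
        Complex.exp (((s * μ * t : ℝ) : ℂ) * Complex.I))) s := by
  have hz := symbol_ne_zero (a := a) hμ
  have h1 : HasDerivAt (fun s : ℝ => (s : ℂ)) 1 s := Complex.ofRealCLM.hasDerivAt
  have h := (((h1.mul_const (((a : ℂ) + Complex.I * (μ : ℂ)) * (t : ℂ))).const_add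
    (-((a * |t| : ℝ) : ℂ))).cexp).div_const ((a : ℂ) + Complex.I * (μ : ℂ))
  refine h.congr_deriv ?_
  rw [Complex.ofReal_exp, ← Complex.exp_add, div_eq_iff hz]
  have : -((a * |t| : ℝ) : ℂ) + (s : ℂ) * (((a : ℂ) + Complex.I * (μ : ℂ)) * (t : ℂ)) =
      ((-(a * (|t| - s * t)) : ℝ) : ℂ) + ((s * μ * t : ℝ) : ℂ) * Complex.I := by
    push_cast; ring
  rw [this]
  ring

/-- The multiplier is Lipschitz in `a ≥ 0`, uniformly in `μ ≠ 0`: the mean value inequality along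
`duhPath`, whose derivative no longer carries the denominator. -/
lemma norm_duhFrac_sub_le {a b μ : ℝ} (ha : 0 ≤ a) (hb : 0 ≤ b) (hμ : μ ≠ 0) (t : ℝ) :
    ‖duhFrac b μ t - duhFrac a μ t‖ ≤ 2 * t ^ 2 * |b - a| := by
  have hd : ∀ s ∈ Set.Icc (0 : ℝ) 1, HasDerivWithinAt (fun s => duhPath b μ t s - duhPath a μ t s)
      _ (Set.Icc (0 : ℝ) 1) s := fun s _ =>
    ((hasDerivAt_duhPath hμ t s).sub (hasDerivAt_duhPath hμ t s)).hasDerivWithinAt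
  have key := norm_image_sub_le_of_norm_deriv_le_segment_01' (C := 2 * t ^ 2 * |b - a|) hd ?_
  · rw [← duhPath_one_sub_zero, ← duhPath_one_sub_zero]
    rwa [sub_sub_sub_comm]
  · intro s hs
    rw [← mul_sub, ← sub_mul, norm_mul, norm_mul, Complex.norm_exp_ofReal_mul_I, mul_one,
      ← Complex.ofReal_sub, Complex.norm_real, Complex.norm_real, Real.norm_eq_abs,
      Real.norm_eq_abs]
    have hst : |s * t| ≤ |t| := by
      rw [abs_mul, abs_of_nonneg hs.1]
      exact mul_le_of_le_one_left (abs_nonneg t) hs.2.le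
    obtain ⟨h1, h2⟩ := abs_le.1 hst
    have h0 : 0 ≤ |t| - s * t := by linarith
    calc |t| * |Real.exp (-(b * (|t| - s * t))) - Real.exp (-(a * (|t| - s * t)))|
        ≤ |t| * |b * (|t| - s * t) - a * (|t| - s * t)| := by
          exact mul_le_mul_of_nonneg_left
            (abs_exp_neg_sub_le (mul_nonneg hb h0) (mul_nonneg ha h0)) (abs_nonneg t)
      _ = |t| * (|b - a| * (|t| - s * t)) := by
          rw [← sub_mul, abs_mul, abs_of_nonneg h0]
      _ ≤ |t| * (|b - a| * (2 * |t|)) := by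
          gcongr
          linarith
      _ = 2 * t ^ 2 * |b - a| := by
          rw [← sq_abs t]; ring

lemma duhKernel_eq (φ : ℝ → ℝ) (γ : ℝ) (n : ℤ × ℤ) (l μ : ℝ) :
    duhKernel φ γ n l μ = ∫ t : ℝ, (φ t : ℂ) * Complex.exp (-(Complex.I * (l : ℂ) * (t : ℂ))) *
      duhFrac (γ * jbSq n) μ t := by
  unfold duhKernel duhFrac
  simp only [mul_right_comm γ _ (jbSq n)]

lemma integrable_kernel {φ : ℝ → ℝ} (hc : Continuous φ) (hs : HasCompactSupport φ) (a l μ : ℝ) :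
    Integrable (fun t : ℝ => (φ t : ℂ) * Complex.exp (-(Complex.I * (l : ℂ) * (t : ℂ))) *
      duhFrac a μ t) := by
  apply Continuous.integrable_of_hasCompactSupport
  · unfold duhFrac
    fun_prop
  · exact ((hs.comp_left Complex.ofReal_zero).mul_right).mul_right

/-- The Lipschitz-in-`γ` kernel estimate (3.31) inside Proposition 3.3:
`|K_{γ₂}(n,λ,μ) − K_{γ₁}(n,λ,μ)| ≤ C |γ₂ − γ₁| ⟨n⟩²`, uniformly in
`γ₁, γ₂ ∈ [0,1]`, `n ∈ ℤ²`, `λ ∈ ℝ` and `μ ∈ ℝ ∖ {0}`. -/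
theorem duhamel_kernel_lipschitz (φ : ℝ → ℝ) (hφ : ContDiff ℝ (⊤ : ℕ∞) φ)
    (hφ1 : ∀ t ∈ Set.Icc (-1 : ℝ) 1, φ t = 1)
    (hφ0 : ∀ t : ℝ, t ∉ Set.Icc (-2 : ℝ) 2 → φ t = 0) :
    ∃ C > (0 : ℝ), ∀ γ₁ ∈ Set.Icc (0 : ℝ) 1, ∀ γ₂ ∈ Set.Icc (0 : ℝ) 1,
      ∀ (n : ℤ × ℤ) (l μ : ℝ), μ ≠ 0 →
        ‖duhKernel φ γ₂ n l μ - duhKernel φ γ₁ n l μ‖ ≤ C * |γ₂ - γ₁| * jbSq n := by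
  have hc : Continuous φ := hφ.continuous
  have hs : HasCompactSupport φ := HasCompactSupport.intro isCompact_Icc (fun t ht => hφ0 t ht)
  have hg : Integrable (fun t : ℝ => |φ t| * (2 * t ^ 2)) := by
    apply Continuous.integrable_of_hasCompactSupport (by fun_prop)
    exact (hs.comp_left abs_zero).mul_right
  have hg0 : 0 ≤ ∫ t : ℝ, |φ t| * (2 * t ^ 2) := integral_nonneg fun t => by positivity
  refine ⟨1 + ∫ t : ℝ, |φ t| * (2 * t ^ 2), by linarith, ?_⟩
  intro γ₁ h₁ γ₂ h₂ n l μ hμ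
  have hN : 0 ≤ jbSq n := by unfold jbSq; positivity
  rw [duhKernel_eq, duhKernel_eq,
    ← integral_sub (integrable_kernel hc hs _ _ _) (integrable_kernel hc hs _ _ _)]
  calc _ ≤ ∫ t : ℝ, |φ t| * (2 * t ^ 2) * (|γ₂ - γ₁| * jbSq n) := by
        refine norm_integral_le_of_norm_le (hg.mul_const _) (Filter.Eventually.of_forall fun t => ?_)
        have he : ‖Complex.exp (-(Complex.I * (l : ℂ) * (t : ℂ)))‖ = 1 := by
          rw [Complex.norm_exp]; simp
        rw [← mul_sub, norm_mul, norm_mul, he, mul_one, Complex.norm_real, Real.norm_eq_abs,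
          mul_assoc]
        have h := norm_duhFrac_sub_le (mul_nonneg h₁.1 hN) (mul_nonneg h₂.1 hN) hμ t
        rw [← sub_mul, abs_mul, abs_of_nonneg hN] at h
        gcongr
    _ = (∫ t : ℝ, |φ t| * (2 * t ^ 2)) * (|γ₂ - γ₁| * jbSq n) := integral_mul_const _ _
    _ ≤ (1 + ∫ t : ℝ, |φ t| * (2 * t ^ 2)) * |γ₂ - γ₁| * jbSq n := by
        rw [mul_assoc]
        gcongr
        linarith
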